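/- arXiv:2406.08962 — 6 statements merged into one kernel-verified Lean document; each statement's English description precedes it below -/
import Mathlib

section
/- Let M be a bounded linear operator on 𝓗 and define f : 𝓗 → 𝓗 by f(ψ) = (⟨ψ, Mψ⟩ / ⟨ψ, ψ⟩) ψ for ψ ≠ 0 and f(0) = 0. Then f is globally Lipschitz with Lipschitz constant 5‖M‖, i.e. ‖f(ψ) − f(φ)‖ ≤ 5‖M‖ ‖ψ − φ‖ for all ψ, φ ∈ 𝓗. -/
open scoped InnerProductSpace

/-- **Lipschitz continuity of the state-average nonlinearity.**
For a bounded operator `M` on a complex Hilbert space `𝓗`, the map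
`f(ψ) = (⟪ψ, Mψ⟫ / ⟪ψ, ψ⟫) • ψ` (with `f 0 = 0`) is globally Lipschitz
with constant `5‖M‖`. -/
theorem lipschitz_state_average {H : Type*} [NormedAddCommGroup H]
    [InnerProductSpace ℂ H] [CompleteSpace H]
    (M : H →L[ℂ] H) (f : H → H) (hf0 : f 0 = 0)
    (hf : ∀ ψ : H, ψ ≠ 0 → f ψ = (⟪ψ, M ψ⟫_ℂ / ⟪ψ, ψ⟫_ℂ) • ψ) :
    ∀ ψ φ : H, ‖f ψ - f φ‖ ≤ 5 * ‖M‖ * ‖ψ - φ‖ := by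
  have key : ∀ ψ : H, ψ ≠ 0 → ∃ u : H, ‖u‖ = 1 ∧ ψ = ((‖ψ‖ : ℝ) : ℂ) • u ∧
      f ψ = ⟪u, M u⟫_ℂ • ψ := by
    intro ψ h
    have hn : ((‖ψ‖ : ℝ) : ℂ) ≠ 0 := by simpa using h
    refine ⟨((‖ψ‖ : ℝ) : ℂ)⁻¹ • ψ, ?_, ?_, ?_⟩
    · rw [norm_smul, norm_inv, Complex.norm_real, norm_norm]
      exact inv_mul_cancel₀ (by simpa using h)
    · rw [smul_inv_smul₀ hn]
    · rw [hf ψ h]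
      congr 1
      rw [map_smul, inner_smul_left, inner_smul_right, inner_self_eq_norm_sq_to_K]
      rw [map_inv₀, Complex.conj_ofReal]
      simp only [Complex.coe_algebraMap]
      field_simp
  have bd : ∀ x y : H, ‖⟪x, M y⟫_ℂ‖ ≤ ‖M‖ * (‖x‖ * ‖y‖) := by
    intro x y
    calc ‖⟪x, M y⟫_ℂ‖ ≤ ‖x‖ * ‖M y‖ := norm_inner_le_norm _ _
      _ ≤ ‖x‖ * (‖M‖ * ‖y‖) := by gcongr; exact M.le_opNorm y
      _ = _ := by ring
  have fb : ∀ ψ : H, ‖f ψ‖ ≤ 5 * ‖M‖ * ‖ψ‖ := by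
    intro ψ
    by_cases h : ψ = 0
    · simp [h, hf0]
    · obtain ⟨u, hu, -, h2⟩ := key ψ h
      have := bd u u
      rw [hu] at this
      rw [h2, norm_smul]
      gcongr
      nlinarith [norm_nonneg M]
  intro ψ φ
  by_cases h1 : ψ = 0
  · subst h1
    simpa [hf0] using fb φ
  by_cases h2 : φ = 0
  · subst h2
    simpa [hf0] using fb ψ
  obtain ⟨u, hu, eu, fu⟩ := key ψ h1
  obtain ⟨v, hv, ev, fv⟩ := key φ h2
  have e : f ψ - f φ = ⟪u, M u⟫_ℂ • (ψ - φ)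
      + (⟪u, M (u - v)⟫_ℂ + ⟪u - v, M v⟫_ℂ) • φ := by
    rw [fu, fv, map_sub, inner_sub_right, inner_sub_left]
    module
  have b1 := bd u u
  have b2 := bd u (u - v)
  have b3 := bd (u - v) v
  rw [hu] at b1 b2
  rw [hv] at b3
  have b4 : ‖u - v‖ * ‖φ‖ ≤ 2 * ‖ψ - φ‖ := by
    have e2 : ((‖φ‖ : ℝ) : ℂ) • (u - v) = ((‖φ‖ - ‖ψ‖ : ℝ) : ℂ) • u + (ψ - φ) := by
      have : ψ - φ = ((‖ψ‖ : ℝ) : ℂ) • u - ((‖φ‖ : ℝ) : ℂ) • v := by rw [← eu, ← ev]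
      rw [this]
      push_cast
      module
    have e3 := norm_add_le (((‖φ‖ - ‖ψ‖ : ℝ) : ℂ) • u) (ψ - φ)
    rw [← e2, norm_smul, norm_smul, hu, Complex.norm_real, Complex.norm_real, norm_norm] at e3
    have e4 := abs_norm_sub_norm_le φ ψ
    rw [norm_sub_rev] at e4
    rw [Real.norm_eq_abs] at e3
    linarith
  rw [e]
  calc _ ≤ ‖⟪u, M u⟫_ℂ‖ * ‖ψ - φ‖ + ‖⟪u, M (u - v)⟫_ℂ + ⟪u - v, M v⟫_ℂ‖ * ‖φ‖ := by
        rw [← norm_smul, ← norm_smul]; exact norm_add_le _ _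
    _ ≤ ‖M‖ * ‖ψ - φ‖ + (2 * ‖M‖ * ‖u - v‖) * ‖φ‖ := by
        gcongr
        · linarith
        · exact (norm_add_le _ _).trans (by linarith)
    _ ≤ _ := by nlinarith [mul_le_mul_of_nonneg_left b4 (norm_nonneg M)]
end

section
/- Let M be a bounded linear operator on 𝓗 and define f : 𝓗 → 𝓗 by f(ψ) = (⟨ψ, Mψ⟩ / ⟨ψ, ψ⟩) ψ for ψ ≠ 0 and f(0) = 0. Then at every ψ ≠ 0 the map f is Fréchet differentiable as a map of real Banach spaces (𝓗 regarded as a real Hilbert space by restriction of scalars), and the real-linear Fréchet derivative Df_ψ is a bounded operator with operator norm not exceeding 5‖M‖. -/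
open scoped InnerProductSpace

/-- **Real Fréchet differentiability of the state-average nonlinearity.**
For a bounded operator `M` on a complex Hilbert space `𝓗`, the map
`f(ψ) = (⟪ψ, Mψ⟫ / ⟪ψ, ψ⟫) • ψ` (with `f 0 = 0`) is, at every `ψ ≠ 0`,
Fréchet differentiable over `ℝ` (viewing `𝓗` as a real Banach space by
restriction of scalars), with real-linear derivative of operator norm
at most `5‖M‖`. -/
theorem hasFDerivAt_state_average {H : Type*} [NormedAddCommGroup H]
    [InnerProductSpace ℂ H] [CompleteSpace H]
    (M : H →L[ℂ] H) (f : H → H) (hf0 : f 0 = 0)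
    (hf : ∀ ψ : H, ψ ≠ 0 → f ψ = (⟪ψ, M ψ⟫_ℂ / ⟪ψ, ψ⟫_ℂ) • ψ)
    (ψ : H) (hψ : ψ ≠ 0) :
    ∃ D : H →L[ℝ] H, HasFDerivAt f D ψ ∧ ‖D‖ ≤ 5 * ‖M‖ := by
  have h0 : ⟪ψ, ψ⟫_ℂ ≠ 0 := inner_self_ne_zero.mpr hψ
  have hn : 0 < ‖ψ‖ := norm_pos_iff.mpr hψ
  have hid : HasFDerivAt (fun x : H => x) (ContinuousLinearMap.id ℝ H) ψ := hasFDerivAt_id ψ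
  have hM : HasFDerivAt (fun x : H => M x) (M.restrictScalars ℝ) ψ :=
    (M.restrictScalars ℝ).hasFDerivAt
  have h1 := hid.inner ℂ hM
  have h2 := hid.inner ℂ hid
  have h3 := (h1.mul (HasFDerivAt.comp (f := fun t : H => ⟪t, t⟫_ℂ) ψ (hasFDerivAt_inv' (𝕜 := ℝ) h0) h2)).smul hid
  refine ⟨_, h3.congr_of_eventuallyEq ?_, ?_⟩
  · filter_upwards [isOpen_ne.mem_nhds hψ] with x hx
    simp [hf x hx, div_eq_mul_inv]
  · refine ContinuousLinearMap.opNorm_le_bound _ (by positivity) fun h => ?_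
    have hc : ‖⟪ψ, ψ⟫_ℂ‖ = ‖ψ‖ ^ 2 := by
      rw [inner_self_eq_norm_sq_to_K]; simp
    have a1 : ‖⟪ψ, M ψ⟫_ℂ‖ ≤ ‖M‖ * ‖ψ‖ ^ 2 := by
      have := norm_inner_le_norm (𝕜 := ℂ) ψ (M ψ)
      nlinarith [M.le_opNorm ψ]
    have a2 : ‖⟪ψ, M h⟫_ℂ‖ ≤ ‖M‖ * ‖ψ‖ * ‖h‖ := by
      have := norm_inner_le_norm (𝕜 := ℂ) ψ (M h)
      nlinarith [M.le_opNorm h]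
    have a3 : ‖⟪h, M ψ⟫_ℂ‖ ≤ ‖M‖ * ‖ψ‖ * ‖h‖ := by
      have := norm_inner_le_norm (𝕜 := ℂ) h (M ψ)
      nlinarith [M.le_opNorm ψ, norm_nonneg h]
    have a4 := norm_inner_le_norm (𝕜 := ℂ) ψ h
    have a5 := norm_inner_le_norm (𝕜 := ℂ) h ψ
    set n := ⟪ψ, ψ⟫_ℂ with hnd
    set m := ⟪ψ, M ψ⟫_ℂ with hmd
    have key : ‖(m * n⁻¹) • h + ((⟪ψ, M h⟫_ℂ + ⟪h, M ψ⟫_ℂ) * n⁻¹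
        - m * (n⁻¹ * (⟪ψ, h⟫_ℂ + ⟪h, ψ⟫_ℂ) * n⁻¹)) • ψ‖ ≤ 5 * ‖M‖ * ‖h‖ := by
      have b1 : ‖m * n⁻¹‖ ≤ ‖M‖ := by
        rw [norm_mul, norm_inv, hc, ← div_eq_mul_inv, div_le_iff₀ (by positivity)]
        exact a1
      have b2 : ‖(⟪ψ, M h⟫_ℂ + ⟪h, M ψ⟫_ℂ) * n⁻¹‖ ≤ 2 * ‖M‖ * ‖h‖ / ‖ψ‖ := by
        rw [norm_mul, norm_inv, hc, ← div_eq_mul_inv, div_le_div_iff₀ (by positivity) hn]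
        have := norm_add_le ⟪ψ, M h⟫_ℂ ⟪h, M ψ⟫_ℂ
        nlinarith
      have b3 : ‖(⟪ψ, h⟫_ℂ + ⟪h, ψ⟫_ℂ) * n⁻¹‖ ≤ 2 * ‖h‖ / ‖ψ‖ := by
        rw [norm_mul, norm_inv, hc, ← div_eq_mul_inv, div_le_div_iff₀ (by positivity) hn]
        have := norm_add_le ⟪ψ, h⟫_ℂ ⟪h, ψ⟫_ℂ
        nlinarith
      have b4 : ‖m * (n⁻¹ * (⟪ψ, h⟫_ℂ + ⟪h, ψ⟫_ℂ) * n⁻¹)‖ ≤ ‖M‖ * (2 * ‖h‖ / ‖ψ‖) := by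
        rw [mul_assoc n⁻¹, ← mul_assoc m, norm_mul]
        gcongr
      calc _ ≤ ‖m * n⁻¹‖ * ‖h‖ + (‖(⟪ψ, M h⟫_ℂ + ⟪h, M ψ⟫_ℂ) * n⁻¹‖
            + ‖m * (n⁻¹ * (⟪ψ, h⟫_ℂ + ⟪h, ψ⟫_ℂ) * n⁻¹)‖) * ‖ψ‖ := by
            refine (norm_add_le _ _).trans ?_
            rw [norm_smul, norm_smul]
            gcongr
            exact norm_sub_le _ _
        _ ≤ ‖M‖ * ‖h‖ + (2 * ‖M‖ * ‖h‖ / ‖ψ‖ + ‖M‖ * (2 * ‖h‖ / ‖ψ‖)) * ‖ψ‖ := by gcongr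
        _ = 5 * ‖M‖ * ‖h‖ := by field_simp; ring
    refine le_of_eq_of_le (congrArg norm ?_) key
    simp [fderivInnerCLM_apply, -inner_self_eq_norm_sq_to_K, ← hnd, ← hmd]
    ring_nf
end

section
/- Let ε, η ∈ ℓ²(ℕ; 𝓗) and let γ_ε = ∑_k ε_k ⊗ ε̄_k and γ_η = ∑_k η_k ⊗ η̄_k. Then ‖γ_ε − γ_η‖₂ ≤ ‖ε − η‖ (‖ε‖ + ‖η‖). -/
open scoped InnerProductSpace

/-- The rank-one operator `x ⊗ ȳ : z ↦ ⟪y, z⟫ x` on a complex Hilbert space. -/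
noncomputable def rankOne {H : Type*} [NormedAddCommGroup H] [InnerProductSpace ℂ H]
    (x y : H) : H →L[ℂ] H :=
  (innerSL ℂ y).smulRight x

/-- The Hilbert–Schmidt norm `‖T‖₂ = (∑ᵢ ‖T eᵢ‖²)^{1/2}` of an operator `T`,
computed with respect to a Hilbert basis `e`. -/
noncomputable def hsNorm {H : Type*} [NormedAddCommGroup H] [InnerProductSpace ℂ H]
    {ι : Type*} (e : HilbertBasis ι ℂ H) (T : H →L[ℂ] H) : ℝ :=
  Real.sqrt (∑' i, ‖T (e i)‖ ^ 2)

lemma aux_rankOne_norm {H : Type*} [NormedAddCommGroup H]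
    [InnerProductSpace ℂ H] {ι : Type*} (e : HilbertBasis ι ℂ H) (s : Finset ι) (x y : H) :
    ‖WithLp.toLp 2 (fun i : s => rankOne x y (e i))‖ ≤ ‖x‖ * ‖y‖ := by
  rw [PiLp.norm_eq_of_L2]
  apply Real.sqrt_le_iff.2 ⟨by positivity, ?_⟩
  have h1 : ∀ i : s, ‖(WithLp.toLp 2 (fun i : s => rankOne x y (e i))) i‖ ^ 2
      = ‖x‖ ^ 2 * ‖⟪e i, y⟫_ℂ‖ ^ 2 := by
    intro i
    simp only [rankOne, ContinuousLinearMap.smulRight_apply, innerSL_apply_apply, norm_smul]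
    rw [norm_inner_symm, mul_pow, mul_comm]
  rw [Finset.sum_congr rfl (fun i _ => h1 i), ← Finset.mul_sum, mul_pow]
  gcongr
  rw [Finset.sum_coe_sort s (fun i => ‖⟪e i, y⟫_ℂ‖ ^ 2)]
  exact e.orthonormal.sum_inner_products_le y

/-- **Hilbert–Schmidt estimate for differences of density operators.**
For `ε, η ∈ ℓ²(ℕ; 𝓗)` and the operators `γ_ε = ∑_k ε_k ⊗ ε̄_k`,
`γ_η = ∑_k η_k ⊗ η̄_k`, one has `‖γ_ε − γ_η‖₂ ≤ ‖ε − η‖ (‖ε‖ + ‖η‖)`. -/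
theorem hsNorm_density_diff_le {H : Type*} [NormedAddCommGroup H]
    [InnerProductSpace ℂ H] [CompleteSpace H] {ι : Type*} (e : HilbertBasis ι ℂ H)
    (ε η : lp (fun _ : ℕ => H) 2) (γε γη : H →L[ℂ] H)
    (hγε : HasSum (fun k => rankOne (ε k) (ε k)) γε)
    (hγη : HasSum (fun k => rankOne (η k) (η k)) γη) :
    hsNorm e (γε - γη) ≤ ‖ε - η‖ * (‖ε‖ + ‖η‖) := by
  have hc : (2 : ℝ).HolderConjugate 2 := Real.HolderConjugate.two_two
  have hc' : (2 : ENNReal).toReal.HolderConjugate (2 : ENNReal).toReal := by simpa using hc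
  obtain ⟨s1, l1⟩ := lp.tsum_mul_le_mul_norm hc' (ε - η) ε
  obtain ⟨s2, l2⟩ := lp.tsum_mul_le_mul_norm hc' (ε - η) η
  have key : ∀ s : Finset ι, ∑ i ∈ s, ‖(γε - γη) (e i)‖ ^ 2 ≤
      (‖ε - η‖ * (‖ε‖ + ‖η‖)) ^ 2 := by
    intro s
    let A : (H →L[ℂ] H) →L[ℂ] PiLp 2 (fun _ : s => H) :=
      ((PiLp.continuousLinearEquiv 2 ℂ (fun _ : s => H)).symm : _ →L[ℂ] _).comp
        (ContinuousLinearMap.pi (fun i : s => ContinuousLinearMap.apply ℂ H (e i)))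
    have hA : ∀ T, A T = WithLp.toLp 2 (fun i : s => T (e i)) := fun T => rfl
    have hs := A.hasSum (hγε.sub hγη)
    have hb := hs.norm_le_of_bounded (s1.hasSum.add s2.hasSum) (fun k => by
      have : rankOne (ε k) (ε k) - rankOne (η k) (η k) =
          rankOne ((ε - η) k) (ε k) + rankOne (η k) ((ε - η) k) := by
        ext z
        simp [rankOne, sub_smul, smul_sub, inner_sub_left]
      simp only [this, map_add]
      refine (norm_add_le _ _).trans (add_le_add ?_ ?_)
      · exact aux_rankOne_norm e s _ _
      · rw [mul_comm]
        exact aux_rankOne_norm e s _ _)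
    have hb2 : ‖A (γε - γη)‖ ≤ ‖ε - η‖ * (‖ε‖ + ‖η‖) := by
      rw [mul_add]; exact hb.trans (add_le_add l1 l2)
    have h3 : ‖A (γε - γη)‖ ^ 2 = ∑ i ∈ s, ‖(γε - γη) (e i)‖ ^ 2 := by
      rw [PiLp.norm_sq_eq_of_L2, ← Finset.sum_coe_sort s]
      rfl
    rw [← h3]
    gcongr
  unfold hsNorm
  apply Real.sqrt_le_iff.2 ⟨by positivity, ?_⟩
  exact Real.tsum_le_of_sum_le (fun i => by positivity) key
end

section
/- Let ε, η ∈ ℓ²(ℕ; 𝓗) and let γ_ε = ∑_k ε_k ⊗ ε̄_k and γ_η = ∑_k η_k ⊗ η̄_k. Then the trace norm of the difference satisfies tr |γ_ε − γ_η| ≤ ‖ε − η‖ (‖ε‖ + ‖η‖), where |T| = (T*T)^{1/2}. -/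
open scoped InnerProductSpace

/-- The absolute value `|T| = (T*T)^{1/2}` of a bounded operator, via the
continuous functional calculus square root. -/
noncomputable def opAbs {H : Type*} [NormedAddCommGroup H] [InnerProductSpace ℂ H]
    [CompleteSpace H] (T : H →L[ℂ] H) : H →L[ℂ] H :=
  CFC.sqrt (star T * T)

lemma aux_star_rankOne {H : Type*} [NormedAddCommGroup H] [InnerProductSpace ℂ H]
    [CompleteSpace H] (x : H) : star (rankOne x x) = rankOne x x := by
  rw [ContinuousLinearMap.star_eq_adjoint, eq_comm, ContinuousLinearMap.eq_adjoint_iff]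
  intro y z
  simp [rankOne, inner_smul_left, inner_smul_right, mul_comm]

lemma aux_selfAdjoint {H : Type*} [NormedAddCommGroup H] [InnerProductSpace ℂ H]
    [CompleteSpace H] (ε : ℕ → H) (γ : H →L[ℂ] H)
    (h : HasSum (fun k => rankOne (ε k) (ε k)) γ) : IsSelfAdjoint γ := by
  have h2 := h.star
  simp only [aux_star_rankOne] at h2
  exact h2.unique h

lemma aux_cfc {H : Type*} [NormedAddCommGroup H] [InnerProductSpace ℂ H]
    [CompleteSpace H] (T : H →L[ℂ] H) (hT : IsSelfAdjoint T) (δ : ℝ) (hδ : 0 < δ) :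
    ∃ V : H →L[ℂ] H, ‖V‖ ≤ 1 ∧ ‖opAbs T - V * T‖ ≤ δ := by
  have hc : Continuous (fun t : ℝ => t / (|t| + δ)) :=
    continuous_id.div (by fun_prop) (fun t => by positivity)
  refine ⟨cfc (fun t : ℝ => t / (|t| + δ)) T, ?_, ?_⟩
  · refine norm_cfc_le zero_le_one fun t _ => ?_
    have : 0 < |t| + δ := by positivity
    rw [Real.norm_eq_abs, abs_div, abs_of_pos this, div_le_one this]
    linarith
  · have h1 : opAbs T = cfc (fun t : ℝ => |t|) T := by
      have := CFC.abs_eq_cfc_norm T hT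
      exact this
    have h2 : cfc (fun t : ℝ => t / (|t| + δ)) T * T
        = cfc (fun t : ℝ => t / (|t| + δ) * t) T := by
      rw [cfc_mul (fun t : ℝ => t / (|t| + δ)) (fun t => t) T hc.continuousOn continuousOn_id,
        cfc_id' ℝ T hT]
    rw [h1, h2, ← cfc_sub (fun t : ℝ => |t|) (fun t : ℝ => t / (|t| + δ) * t) T (by fun_prop) (hc.mul continuous_id).continuousOn]
    refine norm_cfc_le hδ.le fun t _ => ?_
    have hp : 0 < |t| + δ := by positivity
    have : |t| - t / (|t| + δ) * t = δ * |t| / (|t| + δ) := by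
      field_simp
      nlinarith [abs_mul_abs_self t]
    rw [this, Real.norm_eq_abs, abs_of_nonneg (by positivity), div_le_iff₀ hp]
    nlinarith

lemma aux_rank {H : Type*} [NormedAddCommGroup H] [InnerProductSpace ℂ H]
    [CompleteSpace H] {ι : Type*} (e : ι → H) (he : Orthonormal ℂ e) (s : Finset ι)
    (V : H →L[ℂ] H) (hV : ‖V‖ ≤ 1) (x y : H) :
    ∑ i ∈ s, (⟪e i, V (rankOne x y (e i))⟫_ℂ).re ≤ ‖x‖ * ‖y‖ := by
  have hVx : ‖V x‖ ≤ ‖x‖ := by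
    refine (V.le_opNorm x).trans ?_
    nlinarith [norm_nonneg x]
  calc ∑ i ∈ s, (⟪e i, V (rankOne x y (e i))⟫_ℂ).re
      ≤ ∑ i ∈ s, ‖⟪e i, V x⟫_ℂ‖ * ‖⟪e i, y⟫_ℂ‖ := by
        refine Finset.sum_le_sum fun i _ => ?_
        refine (Complex.re_le_norm _).trans ?_
        simp only [rankOne, ContinuousLinearMap.smulRight_apply, innerSL_apply_apply, map_smul,
          inner_smul_right, norm_mul]
        rw [norm_inner_symm y, mul_comm]
    _ ≤ √(∑ i ∈ s, ‖⟪e i, V x⟫_ℂ‖ ^ 2) * √(∑ i ∈ s, ‖⟪e i, y⟫_ℂ‖ ^ 2) :=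
        Real.sum_mul_le_sqrt_mul_sqrt _ _ _
    _ ≤ ‖x‖ * ‖y‖ := by
        gcongr
        · exact (Real.sqrt_le_left (norm_nonneg _)).2
            ((he.sum_inner_products_le (V x)).trans (by gcongr))
        · exact (Real.sqrt_le_left (norm_nonneg _)).2 (he.sum_inner_products_le y)

lemma aux_cs {H : Type*} [NormedAddCommGroup H] [InnerProductSpace ℂ H]
    (a b : lp (fun _ : ℕ => H) 2) (F : Finset ℕ) :
    ∑ k ∈ F, ‖a k‖ * ‖b k‖ ≤ ‖a‖ * ‖b‖ := by
  have key : ∀ a : lp (fun _ : ℕ => H) 2, √(∑ k ∈ F, ‖a k‖ ^ 2) ≤ ‖a‖ := fun a => by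
    have := lp.sum_rpow_le_norm_rpow (p := 2) (by norm_num) a F
    refine (Real.sqrt_le_left (norm_nonneg _)).2 ?_
    simpa using this
  refine (Real.sum_mul_le_sqrt_mul_sqrt _ _ _).trans ?_
  gcongr
  · exact key a
  · exact key b

lemma aux_trace {H : Type*} [NormedAddCommGroup H]
    [InnerProductSpace ℂ H] [CompleteSpace H] {ι : Type*} (e : ι → H) (he : Orthonormal ℂ e)
    (ε η : lp (fun _ : ℕ => H) 2) (γε γη : H →L[ℂ] H)
    (hγε : HasSum (fun k => rankOne (ε k) (ε k)) γε)
    (hγη : HasSum (fun k => rankOne (η k) (η k)) γη) (s : Finset ι)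
    (V : H →L[ℂ] H) (hV : ‖V‖ ≤ 1) :
    ∑ i ∈ s, (⟪e i, V ((γε - γη) (e i))⟫_ℂ).re ≤ ‖ε - η‖ * (‖ε‖ + ‖η‖) := by
  have hs := hγε.sub hγη
  have hc : Continuous (fun A : H →L[ℂ] H => ∑ i ∈ s, (⟪e i, V (A (e i))⟫_ℂ).re) := by
    fun_prop
  have ht := (hc.tendsto _).comp hs
  refine le_of_tendsto ht (Filter.Eventually.of_forall fun F => ?_)
  have hk : ∀ k, rankOne (ε k) (ε k) - rankOne (η k) (η k)
      = rankOne ((ε - η) k) (ε k) + rankOne (η k) ((ε - η) k) := fun k => by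
    ext z
    simp [rankOne, inner_sub_left, smul_sub, sub_smul]
  simp only [Function.comp_apply, hk, ContinuousLinearMap.sum_apply, map_sum, inner_sum,
    Complex.re_sum]
  rw [Finset.sum_comm]
  calc _ ≤ ∑ k ∈ F, (‖(ε - η) k‖ * ‖ε k‖ + ‖(ε - η) k‖ * ‖η k‖) := by
        refine Finset.sum_le_sum fun k _ => ?_
        simp only [ContinuousLinearMap.add_apply, map_add, inner_add_right, Complex.add_re,
          Finset.sum_add_distrib]
        refine add_le_add (aux_rank e he s V hV _ _) ?_
        rw [mul_comm]
        exact aux_rank e he s V hV _ _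
    _ ≤ _ := by
        rw [Finset.sum_add_distrib, mul_add]
        exact add_le_add (aux_cs _ _ _) (aux_cs _ _ _)

/-- **Trace-norm estimate for differences of density operators.**
For `ε, η ∈ ℓ²(ℕ; 𝓗)` and the operators `γ_ε = ∑_k ε_k ⊗ ε̄_k`,
`γ_η = ∑_k η_k ⊗ η̄_k`, the trace norm satisfies
`tr |γ_ε − γ_η| ≤ ‖ε − η‖ (‖ε‖ + ‖η‖)`, where `|T| = (T*T)^{1/2}` and the
trace of a positive operator is the `[0,∞]`-valued sum `∑ᵢ ⟪eᵢ, · eᵢ⟫` over a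
Hilbert basis `e`. -/
theorem traceNorm_density_diff_le {H : Type*} [NormedAddCommGroup H]
    [InnerProductSpace ℂ H] [CompleteSpace H] {ι : Type*} (e : HilbertBasis ι ℂ H)
    (ε η : lp (fun _ : ℕ => H) 2) (γε γη : H →L[ℂ] H)
    (hγε : HasSum (fun k => rankOne (ε k) (ε k)) γε)
    (hγη : HasSum (fun k => rankOne (η k) (η k)) γη) :
    ∑' i, ENNReal.ofReal (⟪e i, opAbs (γε - γη) (e i)⟫_ℂ).re ≤
      ENNReal.ofReal (‖ε - η‖ * (‖ε‖ + ‖η‖)) := by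
  have hT : IsSelfAdjoint (γε - γη) :=
    (aux_selfAdjoint _ _ hγε).sub (aux_selfAdjoint _ _ hγη)
  have hpos : ∀ x, 0 ≤ (⟪x, opAbs (γε - γη) x⟫_ℂ).re := fun x => by
    have h0 : (0 : H →L[ℂ] H) ≤ opAbs (γε - γη) := CFC.sqrt_nonneg _
    rw [ContinuousLinearMap.nonneg_iff_isPositive] at h0
    exact h0.re_inner_nonneg_right x
  rw [ENNReal.tsum_eq_iSup_sum]
  refine iSup_le fun s => ?_
  rw [← ENNReal.ofReal_sum_of_nonneg fun i _ => hpos _]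
  refine ENNReal.ofReal_le_ofReal ?_
  refine le_of_forall_pos_le_add fun r hr => ?_
  obtain ⟨V, hV, hVT⟩ := aux_cfc _ hT (r / (s.card + 1)) (by positivity)
  have h1 : ∀ i ∈ s, (⟪e i, opAbs (γε - γη) (e i)⟫_ℂ).re
      ≤ (⟪e i, V ((γε - γη) (e i))⟫_ℂ).re + r / (s.card + 1) := fun i _ => by
    have hn : ‖e i‖ = 1 := e.orthonormal.1 i
    have h2 : (⟪e i, (opAbs (γε - γη) - V * (γε - γη)) (e i)⟫_ℂ).re ≤ r / (s.card + 1) := by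
      refine (Complex.re_le_norm _).trans ((norm_inner_le_norm _ _).trans ?_)
      rw [hn, one_mul]
      refine (ContinuousLinearMap.le_opNorm _ _).trans ?_
      rwa [hn, mul_one]
    rw [ContinuousLinearMap.sub_apply, inner_sub_right, Complex.sub_re,
      ContinuousLinearMap.mul_apply] at h2
    linarith
  refine (Finset.sum_le_sum h1).trans ?_
  rw [Finset.sum_add_distrib]
  refine add_le_add (aux_trace e e.orthonormal ε η γε γη hγε hγη s V hV) ?_
  rw [Finset.sum_const, nsmul_eq_mul, ← mul_div_assoc, div_le_iff₀ (by positivity)]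
  nlinarith
end

section
/- Let ε, η ∈ ℓ²(ℕ; 𝓗) be nonzero, and set ρ_ε = γ_ε / ‖ε‖² and ρ_η = γ_η / ‖η‖², where γ_ε = ∑_k ε_k ⊗ ε̄_k and γ_η = ∑_k η_k ⊗ η̄_k. Then ‖ρ_ε − ρ_η‖₂ ≤ 2 ‖ε − η‖ (‖ε‖ + ‖η‖) / ‖ε‖², and consequently ‖ρ_ε − ρ_η‖₂ ≤ 4 ‖ε − η‖ / ‖ε‖ + 2 ‖ε − η‖² / ‖ε‖². -/
open scoped InnerProductSpace

lemma aux_hasSum {H : Type*} [NormedAddCommGroup H]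
    [InnerProductSpace ℂ H] (a b : lp (fun _ : ℕ => H) 2) :
    ∃ C, C ≤ ‖a‖ * ‖b‖ ∧ HasSum (fun k => ‖a k‖ * ‖b k‖) C := by
  have h2 : (0:ℝ) < (2 : ENNReal).toReal := by norm_num
  have ha := lp.hasSum_norm h2 a
  have hb := lp.hasSum_norm h2 b
  simp only [ENNReal.toReal_ofNat] at ha hb
  obtain ⟨C, -, h, h'⟩ := Real.inner_le_Lp_mul_Lq_hasSum_of_nonneg
    (p := 2) (q := 2) (by constructor <;> norm_num) (norm_nonneg a) (norm_nonneg b)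
    (fun k => norm_nonneg (a k)) (fun k => norm_nonneg (b k)) ha hb
  exact ⟨C, h, h'⟩

noncomputable def auxL {H : Type*} [NormedAddCommGroup H]
    [InnerProductSpace ℂ H] {ι : Type*} (e : HilbertBasis ι ℂ H) (s : Finset ι) :
    (H →L[ℂ] H) →L[ℂ] PiLp 2 (fun _ : s => H) :=
  ((PiLp.continuousLinearEquiv 2 ℂ (fun _ : s => H)).symm :
      (s → H) →L[ℂ] PiLp 2 (fun _ : s => H)) ∘L
    ContinuousLinearMap.pi (fun i : s => ContinuousLinearMap.apply ℂ H (e i))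

lemma auxL_norm {H : Type*} [NormedAddCommGroup H]
    [InnerProductSpace ℂ H] {ι : Type*} (e : HilbertBasis ι ℂ H) (s : Finset ι)
    (T : H →L[ℂ] H) : ‖auxL e s T‖ ^ 2 = ∑ i ∈ s, ‖T (e i)‖ ^ 2 := by
  rw [PiLp.norm_sq_eq_of_L2, ← Finset.sum_coe_sort s]
  rfl

lemma auxL_rankOne {H : Type*} [NormedAddCommGroup H]
    [InnerProductSpace ℂ H] {ι : Type*} (e : HilbertBasis ι ℂ H) (s : Finset ι)
    (x y : H) : ‖auxL e s (rankOne x y)‖ ≤ ‖x‖ * ‖y‖ := by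
  refine (abs_le_of_sq_le_sq' ?_ (by positivity)).2
  rw [auxL_norm]
  have h := e.orthonormal.sum_inner_products_le (x := y) (s := s)
  calc _ = (∑ i ∈ s, ‖⟪e i, y⟫_ℂ‖ ^ 2) * ‖x‖ ^ 2 := by
        rw [Finset.sum_mul]
        refine Finset.sum_congr rfl fun i _ => ?_
        simp [rankOne, norm_smul, mul_pow, norm_inner_symm]
    _ ≤ ‖y‖ ^ 2 * ‖x‖ ^ 2 := by gcongr
    _ = _ := by ring

lemma hsNorm_le {H : Type*} [NormedAddCommGroup H]
    [InnerProductSpace ℂ H] {ι : Type*} (e : HilbertBasis ι ℂ H)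
    (T : H →L[ℂ] H) (C : ℝ) (hC : 0 ≤ C) (h : ∀ s, ‖auxL e s T‖ ≤ C) : hsNorm e T ≤ C := by
  unfold hsNorm
  rw [Real.sqrt_le_left hC]
  refine Real.tsum_le_of_sum_le (fun i => by positivity) fun s => ?_
  rw [← auxL_norm]
  have := h s
  gcongr

lemma auxL_gamma {H : Type*} [NormedAddCommGroup H]
    [InnerProductSpace ℂ H] {ι : Type*} (e : HilbertBasis ι ℂ H) (s : Finset ι)
    (η : lp (fun _ : ℕ => H) 2) (γη : H →L[ℂ] H)
    (hγη : HasSum (fun k => rankOne (η k) (η k)) γη) :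
    ‖auxL e s γη‖ ≤ ‖η‖ ^ 2 := by
  obtain ⟨C, hC, hs⟩ := aux_hasSum η η
  have h := (auxL e s).hasSum hγη
  have := tsum_of_norm_bounded hs (fun k => auxL_rankOne e s (η k) (η k))
  have h' := h.tsum_eq
  simp only [Function.comp_def] at h'
  rw [h'] at this
  linarith [sq ‖η‖]

lemma auxL_diff {H : Type*} [NormedAddCommGroup H]
    [InnerProductSpace ℂ H] {ι : Type*} (e : HilbertBasis ι ℂ H) (s : Finset ι)
    (ε η : lp (fun _ : ℕ => H) 2) (γε γη : H →L[ℂ] H)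
    (hγε : HasSum (fun k => rankOne (ε k) (ε k)) γε)
    (hγη : HasSum (fun k => rankOne (η k) (η k)) γη) :
    ‖auxL e s (γε - γη)‖ ≤ ‖ε - η‖ * (‖ε‖ + ‖η‖) := by
  obtain ⟨C, hC, hs⟩ := aux_hasSum ε (ε - η)
  obtain ⟨D, hD, ht⟩ := aux_hasSum (ε - η) η
  have h := (auxL e s).hasSum (hγε.sub hγη)
  have h' := h.tsum_eq
  simp only [Function.comp_def] at h'
  rw [← h']
  refine (tsum_of_norm_bounded (hs.add ht) fun k => ?_).trans (by linarith)
  have : rankOne (ε k) (ε k) - rankOne (η k) (η k) =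
      rankOne (ε k) ((ε - η) k) + rankOne ((ε - η) k) (η k) := by
    ext z
    simp [rankOne, inner_sub_left, sub_smul, smul_sub]
  rw [this, map_add]
  exact (norm_add_le _ _).trans (add_le_add (auxL_rankOne e s _ _) (auxL_rankOne e s _ _))

/-- **Hilbert–Schmidt estimate for differences of normalised density operators.**
For nonzero `ε, η ∈ ℓ²(ℕ; 𝓗)`, with `γ_ε = ∑_k ε_k ⊗ ε̄_k`,
`γ_η = ∑_k η_k ⊗ η̄_k` and the normalised operators `ρ_ε = γ_ε/‖ε‖²`,
`ρ_η = γ_η/‖η‖²`, one has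
`‖ρ_ε − ρ_η‖₂ ≤ 2‖ε − η‖(‖ε‖ + ‖η‖)/‖ε‖²` and consequently
`‖ρ_ε − ρ_η‖₂ ≤ 4‖ε − η‖/‖ε‖ + 2‖ε − η‖²/‖ε‖²`. -/
theorem hsNorm_normalised_density_diff_le {H : Type*} [NormedAddCommGroup H]
    [InnerProductSpace ℂ H] [CompleteSpace H] {ι : Type*} (e : HilbertBasis ι ℂ H)
    (ε η : lp (fun _ : ℕ => H) 2) (hε : ε ≠ 0) (hη : η ≠ 0)
    (γε γη : H →L[ℂ] H)
    (hγε : HasSum (fun k => rankOne (ε k) (ε k)) γε)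
    (hγη : HasSum (fun k => rankOne (η k) (η k)) γη) :
    hsNorm e ((‖ε‖ ^ 2)⁻¹ • γε - (‖η‖ ^ 2)⁻¹ • γη) ≤
        2 * ‖ε - η‖ * (‖ε‖ + ‖η‖) / ‖ε‖ ^ 2 ∧
    hsNorm e ((‖ε‖ ^ 2)⁻¹ • γε - (‖η‖ ^ 2)⁻¹ • γη) ≤
        4 * ‖ε - η‖ / ‖ε‖ + 2 * ‖ε - η‖ ^ 2 / ‖ε‖ ^ 2 := by
  have he : 0 < ‖ε‖ := norm_pos_iff.mpr hε
  have hn : 0 < ‖η‖ := norm_pos_iff.mpr hη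
  have hd : 0 ≤ ‖ε - η‖ := norm_nonneg _
  have main : hsNorm e ((‖ε‖ ^ 2)⁻¹ • γε - (‖η‖ ^ 2)⁻¹ • γη) ≤
        2 * ‖ε - η‖ * (‖ε‖ + ‖η‖) / ‖ε‖ ^ 2 := by
    refine hsNorm_le e _ _ (by positivity) fun s => ?_
    have h1 := auxL_diff e s ε η γε γη hγε hγη
    have h2 := auxL_gamma e s η γη hγη
    have heq : (‖ε‖ ^ 2)⁻¹ • γε - (‖η‖ ^ 2)⁻¹ • γη =
        (((‖ε‖ ^ 2)⁻¹ : ℝ) : ℂ) • (γε - γη) +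
          (((‖ε‖ ^ 2)⁻¹ - (‖η‖ ^ 2)⁻¹ : ℝ) : ℂ) • γη := by
      rw [Complex.coe_smul, Complex.coe_smul, smul_sub, sub_smul]
      abel
    have h3 : |(‖ε‖ ^ 2)⁻¹ - (‖η‖ ^ 2)⁻¹| * ‖η‖ ^ 2 ≤
        (‖ε‖ ^ 2)⁻¹ * (‖ε - η‖ * (‖ε‖ + ‖η‖)) := by
      have h4 : |‖ε‖ - ‖η‖| ≤ ‖ε - η‖ := abs_norm_sub_norm_le ε η
      have h5 : (‖ε‖ ^ 2)⁻¹ - (‖η‖ ^ 2)⁻¹ =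
          -((‖ε‖ ^ 2)⁻¹ * (‖η‖ ^ 2)⁻¹ * (‖ε‖ + ‖η‖) * (‖ε‖ - ‖η‖)) := by
        field_simp
        ring
      rw [h5, abs_neg, abs_mul, abs_of_nonneg (by positivity)]
      calc _ = (‖ε‖ ^ 2)⁻¹ * (|‖ε‖ - ‖η‖| * (‖ε‖ + ‖η‖)) := by field_simp
        _ ≤ _ := by gcongr
    rw [heq, map_add, map_smul, map_smul]
    refine (norm_add_le _ _).trans ?_
    rw [norm_smul, norm_smul, Complex.norm_real, Complex.norm_real, Real.norm_eq_abs,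
      Real.norm_eq_abs, abs_of_nonneg (a := (‖ε‖ ^ 2)⁻¹) (by positivity)]
    calc _ ≤ (‖ε‖ ^ 2)⁻¹ * (‖ε - η‖ * (‖ε‖ + ‖η‖)) +
          |(‖ε‖ ^ 2)⁻¹ - (‖η‖ ^ 2)⁻¹| * ‖η‖ ^ 2 := by gcongr
      _ ≤ (‖ε‖ ^ 2)⁻¹ * (‖ε - η‖ * (‖ε‖ + ‖η‖)) +
          (‖ε‖ ^ 2)⁻¹ * (‖ε - η‖ * (‖ε‖ + ‖η‖)) := by gcongr
      _ = _ := by ring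
  refine ⟨main, main.trans ?_⟩
  have h6 : ‖η‖ ≤ ‖ε‖ + ‖ε - η‖ := by
    have := norm_sub_norm_le η ε
    rw [norm_sub_rev] at this
    linarith
  calc _ ≤ 2 * ‖ε - η‖ * (‖ε‖ + (‖ε‖ + ‖ε - η‖)) / ‖ε‖ ^ 2 := by gcongr
    _ = _ := by field_simp; ring
end

section
/- Let L be a bounded linear operator on 𝓗 and define G : 𝓗 → 𝓗 by G(ψ) = (⟨ψ, (L + L*)ψ⟩ / ⟨ψ, ψ⟩) Lψ for ψ ≠ 0 and G(0) = 0. Then G is globally Lipschitz with Lipschitz constant 10‖L‖², i.e. ‖G(ψ) − G(φ)‖ ≤ 10‖L‖² ‖ψ − φ‖ for all ψ, φ ∈ 𝓗. -/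
open scoped InnerProductSpace

/-- **Lipschitz continuity of the filtering drift nonlinearity.**
For a bounded operator `L` on a complex Hilbert space `𝓗`, the map
`G(ψ) = (⟪ψ, (L + L*)ψ⟫ / ⟪ψ, ψ⟫) • Lψ` (with `G 0 = 0`) is globally
Lipschitz with constant `10‖L‖²`. -/
theorem lipschitz_filtering_drift {H : Type*} [NormedAddCommGroup H]
    [InnerProductSpace ℂ H] [CompleteSpace H]
    (L : H →L[ℂ] H) (G : H → H) (hG0 : G 0 = 0)
    (hG : ∀ ψ : H, ψ ≠ 0 →
      G ψ = (⟪ψ, (L + L.adjoint) ψ⟫_ℂ / ⟪ψ, ψ⟫_ℂ) • (L ψ)) :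
    ∀ ψ φ : H, ‖G ψ - G φ‖ ≤ 10 * ‖L‖ ^ 2 * ‖ψ - φ‖ := by
  have hM : ‖L + L.adjoint‖ ≤ 2 * ‖L‖ := by
    have h1 := norm_add_le L L.adjoint
    have h2 : ‖L.adjoint‖ = ‖L‖ := LinearIsometryEquiv.norm_map _ _
    linarith
  generalize L + L.adjoint = M at hM hG
  have hl : 0 ≤ ‖L‖ := norm_nonneg _
  have hMx : ∀ x : H, ‖M x‖ ≤ 2 * ‖L‖ * ‖x‖ := fun x =>
    (M.le_opNorm x).trans (mul_le_mul_of_nonneg_right hM (norm_nonneg x))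
  have key : ∀ ψ : H, ψ ≠ 0 → ∃ u : H, ‖u‖ = 1 ∧ (‖ψ‖ : ℂ) • u = ψ ∧
      G ψ = ⟪u, M u⟫_ℂ • L ψ := by
    intro ψ hψ
    have hn : (‖ψ‖ : ℂ) ≠ 0 := by exact_mod_cast norm_ne_zero_iff.mpr hψ
    refine ⟨(‖ψ‖ : ℂ)⁻¹ • ψ, ?_, ?_, ?_⟩
    · rw [norm_smul, norm_inv, Complex.norm_real, norm_norm]
      exact inv_mul_cancel₀ (norm_ne_zero_iff.mpr hψ)
    · rw [smul_smul, mul_inv_cancel₀ hn, one_smul]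
    · rw [hG ψ hψ, map_smul, inner_smul_left, inner_smul_right, inner_self_eq_norm_sq_to_K]
      congr 1
      simp only [map_inv₀, Complex.conj_ofReal, Complex.coe_algebraMap]
      field_simp
  have hq : ∀ u : H, ‖u‖ = 1 → ‖⟪u, M u⟫_ℂ‖ ≤ 2 * ‖L‖ := by
    intro u hu
    have h1 := norm_inner_le_norm (𝕜 := ℂ) u (M u)
    have h2 := hMx u
    rw [hu] at h1 h2
    linarith
  have hz : ∀ ψ : H, ‖G ψ‖ ≤ 10 * ‖L‖ ^ 2 * ‖ψ‖ := by
    intro ψ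
    by_cases hψ : ψ = 0
    · simp [hψ, hG0]
    obtain ⟨u, hu, -, hGu⟩ := key ψ hψ
    rw [hGu, norm_smul]
    have h1 := mul_le_mul (hq u hu) (L.le_opNorm ψ) (norm_nonneg _) (by positivity)
    have : 0 ≤ ‖L‖ ^ 2 * ‖ψ‖ := by positivity
    nlinarith
  intro ψ φ
  by_cases hψ : ψ = 0
  · subst hψ
    simpa [hG0] using hz φ
  by_cases hφ : φ = 0
  · subst hφ
    simpa [hG0] using hz ψ
  obtain ⟨u, hu, hu', hGu⟩ := key ψ hψ
  obtain ⟨v, hv, hv', hGv⟩ := key φ hφ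
  have e1 : G ψ - G φ = ⟪u, M u⟫_ℂ • L (ψ - φ) + (⟪u, M u⟫_ℂ - ⟪v, M v⟫_ℂ) • L φ := by
    rw [hGu, hGv, map_sub, smul_sub, sub_smul]; abel
  have e2 : ⟪u, M u⟫_ℂ - ⟪v, M v⟫_ℂ = ⟪u - v, M u⟫_ℂ + ⟪v, M (u - v)⟫_ℂ := by
    rw [map_sub, inner_sub_left, inner_sub_right]; ring
  have b2 : ‖⟪u, M u⟫_ℂ - ⟪v, M v⟫_ℂ‖ ≤ 4 * ‖L‖ * ‖u - v‖ := by
    rw [e2]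
    have h0 := norm_add_le ⟪u - v, M u⟫_ℂ ⟪v, M (u - v)⟫_ℂ
    have h1 := norm_inner_le_norm (𝕜 := ℂ) (u - v) (M u)
    have h2 := norm_inner_le_norm (𝕜 := ℂ) v (M (u - v))
    have h3 := hMx u
    have h4 := hMx (u - v)
    rw [hv] at h2
    rw [hu] at h3
    have h5 := mul_le_mul_of_nonneg_left h3 (norm_nonneg (u - v))
    linarith
  have b3 : ‖φ‖ * ‖u - v‖ ≤ 2 * ‖ψ - φ‖ := by
    have h1 : (‖φ‖ : ℂ) • (u - v) = ((‖φ‖ : ℂ) - (‖ψ‖ : ℂ)) • u + (ψ - φ) := by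
      rw [smul_sub, hv', sub_smul, hu']; abel
    have h2 : ‖(‖φ‖ : ℂ) • (u - v)‖ = ‖φ‖ * ‖u - v‖ := by
      rw [norm_smul, Complex.norm_real, norm_norm]
    have h3 : ‖((‖φ‖ : ℂ) - (‖ψ‖ : ℂ)) • u‖ ≤ ‖ψ - φ‖ := by
      rw [norm_smul, hu, mul_one, ← Complex.ofReal_sub, Complex.norm_real, Real.norm_eq_abs,
        norm_sub_rev ψ φ]
      exact abs_norm_sub_norm_le φ ψ
    rw [← h2, h1]
    have := norm_add_le (((‖φ‖ : ℂ) - (‖ψ‖ : ℂ)) • u) (ψ - φ)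
    linarith
  rw [e1]
  have h0 := norm_add_le (⟪u, M u⟫_ℂ • L (ψ - φ)) ((⟪u, M u⟫_ℂ - ⟪v, M v⟫_ℂ) • L φ)
  rw [norm_smul, norm_smul] at h0
  have h1 := mul_le_mul (hq u hu) (L.le_opNorm (ψ - φ)) (norm_nonneg _) (by positivity)
  have h2 := mul_le_mul b2 (L.le_opNorm φ) (norm_nonneg _) (by positivity)
  have h3 := mul_le_mul_of_nonneg_left b3 (by positivity : 0 ≤ 4 * ‖L‖ ^ 2)
  nlinarith
end
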